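/- Let α ∈ (1/2, 1), λ > 0, ν ∈ (1/2, α), and let Z : [0,1] → ℝ be continuous with Z(0) = 0 such that for every γ < 1/2, Z has Hölder regularity γ on [0,1]. Then for every t ∈ [0,1], ∫_0^t D^ν f^{α,λ}(t−s) I^ν Z_s ds = ∫_0^t ( ∫_0^s D^ν f^{α,λ}(s−u) D^{1−ν} Z_u du ) ds, where in particular I^ν Z_s = ∫_0^s D^{1−ν} Z_u du. -/

import Mathlib

/-!
Write `K = D^ν f^{α,λ}` and `g = D^{1-ν} Z`. Two facts give the identity.

* `rlKer_primitive`: `I^ν Z` is the primitive of `g`, and `g` is continuous. As `1 - ν < 1/2`, `Z` is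
  Hölder of some exponent `γ > 1 - ν`, so the Marchaud integral
  `∫ r, μ r ^ (-μ - 1) (Z y - Z (y - r))` with `μ = 1 - ν` converges absolutely and depends
  continuously on `y`. Fubini and an integration by parts (`marchaud`) identify its primitive with
  the kernel integral defining `I^ν Z`.
* `fracDeriv_falpha_integrable`: `K` is integrable on `(0,1]`. No formula for `K` is needed.
  Splitting the Mittag-Leffler series at `-x` as `(E(x) + E(-x)) - E(x)` and scaling the kernel
  integral to `[0,1]` writes `rlKer ν f` as a difference of two monotone functions (here `ν ≤ α` is
  used), whose derivatives are integrable.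

With `K` and `g` integrable, `fubini_conv` is the statement `K * (g * 1) = (K * g) * 1` for
convolutions on the half-line, which is the claim once `I^ν Z = g * 1`.
-/

open MeasureTheory Filter Set

/-- Mittag-Leffler function `E_{a,b}(z) = ∑ z^n / Γ(a n + b)`. -/
noncomputable def mlf (a b z : ℝ) : ℝ := ∑' n : ℕ, z ^ n / Real.Gamma (a * n + b)

/-- `f^{α,λ}(x) = λ x^{α-1} E_{α,α}(-λ x^α)`. -/
noncomputable def falpha (a lam x : ℝ) : ℝ := lam * x ^ (a - 1) * mlf a a (-lam * x ^ a)

/-- Hölder regularity `γ` on a set `S`. -/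
def HolderOn (f : ℝ → ℝ) (γ : ℝ) (S : Set ℝ) : Prop :=
  ∃ C > 0, ∀ x ∈ S, ∀ y ∈ S, |f x - f y| ≤ C * |x - y| ^ γ

/-- Riemann–Liouville fractional integral of order `v` on `[0,1]`. -/
noncomputable def fracInt (v : ℝ) (f : ℝ → ℝ) (x : ℝ) : ℝ :=
  (1 / Real.Gamma v) * ∫ t in (0:ℝ)..x, f t * (x - t) ^ (v - 1)

/-- The kernel integral `x ↦ ∫_0^x f(t) (x-t)^{-v} dt` appearing in the
Riemann–Liouville fractional derivative. -/
noncomputable def rlKer (v : ℝ) (f : ℝ → ℝ) (y : ℝ) : ℝ :=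
  ∫ t in (0:ℝ)..y, f t * (y - t) ^ (-v)

/-- Riemann–Liouville fractional derivative of order `v` on `[0,1]`
(defined when `rlKer v f` is differentiable). -/
noncomputable def fracDeriv (v : ℝ) (f : ℝ → ℝ) (x : ℝ) : ℝ :=
  (1 / Real.Gamma (1 - v)) * derivWithin (rlKer v f) (Set.Icc 0 1) x

/-! ### Mittag-Leffler series -/

/-- Integrating only over `t > M` in Euler's integral shows that `Γ` grows faster than any
exponential. -/
lemma gamma_lower {M x : ℝ} (hM : 0 < M) (hx : 1 ≤ x) :
    M ^ (x - 1) * Real.exp (-M) ≤ Real.Gamma x := by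
  rw [Real.Gamma_eq_integral (by linarith)]
  have hInt := Real.GammaIntegral_convergent (s := x) (by linarith)
  calc M ^ (x - 1) * Real.exp (-M)
      = ∫ t in Ioi M, Real.exp (-t) * M ^ (x - 1) := by
        rw [integral_mul_const, integral_exp_neg_Ioi, mul_comm]
    _ ≤ ∫ t in Ioi M, Real.exp (-t) * t ^ (x - 1) := by
        refine setIntegral_mono_on ((integrableOn_exp_neg_Ioi M).mul_const _)
          (hInt.mono_set (Ioi_subset_Ioi hM.le)) measurableSet_Ioi fun t ht => ?_
        have ht' : M < t := ht
        gcongr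
    _ ≤ ∫ t in Ioi 0, Real.exp (-t) * t ^ (x - 1) := by
        refine setIntegral_mono_set hInt ?_ (Ioi_subset_Ioi hM.le).eventuallyLE
        filter_upwards [ae_restrict_mem measurableSet_Ioi] with t ht
        have : 0 < t := ht
        positivity

lemma mlf_summable {a : ℝ} (ha : 0 < a) (z : ℝ) :
    Summable fun n : ℕ => z ^ n / Real.Gamma (a * n + a) := by
  -- Choosing `M ^ a = 2 |z| + 1` makes the majorant geometric with ratio below `1 / 2`.
  set M : ℝ := (2 * |z| + 1) ^ (1 / a) with hMdef
  have hz : 0 ≤ |z| := abs_nonneg z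
  have hM : 0 < M := by positivity
  have hMa : M ^ a = 2 * |z| + 1 := by
    rw [hMdef, ← Real.rpow_mul (by positivity), one_div_mul_cancel ha.ne', Real.rpow_one]
  set q : ℝ := |z| / (2 * |z| + 1) with hq
  have hq0 : 0 ≤ q := by positivity
  have hq1 : q < 1 := by rw [hq, div_lt_one (by positivity)]; linarith
  have hs : Summable fun n : ℕ => (Real.exp M * M ^ (1 - a)) * q ^ n :=
    (summable_geometric_of_lt_one hq0 hq1).mul_left _
  obtain ⟨N, hN⟩ := exists_nat_gt (1 / a)
  rw [← summable_nat_add_iff N] at hs ⊢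
  refine Summable.of_norm_bounded hs fun n => ?_
  have h1 : 1 ≤ a * ((n + N : ℕ) : ℝ) + a := by
    have : 1 < a * N := by rwa [div_lt_iff₀ ha, mul_comm] at hN
    push_cast
    have : 0 ≤ a * n := by positivity
    nlinarith
  have hG := gamma_lower hM h1
  have hpos : 0 < M ^ (a * ((n + N : ℕ) : ℝ) + a - 1) * Real.exp (-M) := by positivity
  rw [norm_div, norm_pow, Real.norm_eq_abs, Real.norm_eq_abs, abs_of_pos (hpos.trans_le hG)]
  refine (div_le_div_of_nonneg_left (by positivity) hpos hG).trans_eq ?_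
  have e1 : M ^ (a * ((n + N : ℕ) : ℝ) + a - 1) = (2 * |z| + 1) ^ (n + N) * M ^ (a - 1) := by
    rw [add_sub_assoc, Real.rpow_add hM, Real.rpow_mul hM.le, hMa, Real.rpow_natCast]
  have e2 : M ^ (1 - a) = (M ^ (a - 1))⁻¹ := by
    rw [← Real.rpow_neg hM.le, neg_sub]
  rw [e1, e2, Real.exp_neg, hq, div_pow]
  have : 0 < M ^ (a - 1) := by positivity
  field_simp

lemma mlf_monotoneOn {a : ℝ} (ha : 0 < a) : MonotoneOn (mlf a a) (Ici 0) := by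
  intro x hx y hy hxy
  refine Summable.tsum_le_tsum (fun n => ?_) (mlf_summable ha x) (mlf_summable ha y)
  have : 0 < Real.Gamma (a * n + a) := Real.Gamma_pos_of_pos (by positivity)
  have hx' : 0 ≤ x := hx
  gcongr

lemma mlf_nonneg {a : ℝ} (ha : 0 < a) {x : ℝ} (hx : 0 ≤ x) : 0 ≤ mlf a a x := by
  refine tsum_nonneg fun n => ?_
  have : 0 < Real.Gamma (a * n + a) := Real.Gamma_pos_of_pos (by positivity)
  positivity

/-- Only the even powers survive in `E(x) + E(-x)`, each with a positive coefficient. -/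
lemma mlf_even_monotoneOn {a : ℝ} (ha : 0 < a) :
    MonotoneOn (fun x => mlf a a x + mlf a a (-x)) (Ici 0) := by
  intro x hx y hy hxy
  have hx' : 0 ≤ x := hx
  simp only [mlf]
  rw [← (mlf_summable ha x).tsum_add (mlf_summable ha (-x)),
    ← (mlf_summable ha y).tsum_add (mlf_summable ha (-y))]
  refine Summable.tsum_le_tsum (fun n => ?_) ((mlf_summable ha x).add (mlf_summable ha (-x)))
    ((mlf_summable ha y).add (mlf_summable ha (-y)))
  have : 0 < Real.Gamma (a * n + a) := Real.Gamma_pos_of_pos (by positivity)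
  rw [← add_div, ← add_div]
  rcases n.even_or_odd with h | h
  · rw [h.neg_pow, h.neg_pow]
    gcongr
  · rw [h.neg_pow, h.neg_pow]
    simp

lemma mlf_even_nonneg {a : ℝ} (ha : 0 < a) {x : ℝ} (hx : 0 ≤ x) :
    0 ≤ mlf a a x + mlf a a (-x) := by
  have h0 : 0 ≤ mlf a a 0 := mlf_nonneg ha le_rfl
  have := mlf_even_monotoneOn ha (mem_Ici.2 le_rfl) (mem_Ici.2 hx) hx
  simp only [neg_zero] at this
  linarith

/-! ### Integrability of the fractional derivative of `falpha` -/

lemma beta_intervalIntegrable {a b : ℝ} (ha : 0 < a) (hb : 0 < b) :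
    IntervalIntegrable (fun w : ℝ => w ^ (a - 1) * (1 - w) ^ (b - 1)) volume 0 1 := by
  have h := Complex.betaIntegral_convergent (u := a) (v := b) (by simpa) (by simpa)
  rw [intervalIntegrable_iff_integrableOn_Ioc_of_le zero_le_one] at h ⊢
  refine (h.re).congr ?_
  filter_upwards [ae_restrict_mem measurableSet_Ioc] with w hw
  have h1 : (w : ℂ) ^ ((a : ℂ) - 1) = ((w ^ (a - 1) : ℝ) : ℂ) := by
    rw [Complex.ofReal_cpow hw.1.le]; simp
  have h2 : (1 - (w : ℂ)) ^ ((b : ℂ) - 1) = (((1 - w) ^ (b - 1) : ℝ) : ℂ) := by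
    rw [Complex.ofReal_cpow (by linarith [hw.2])]; simp
  rw [h1, h2, ← Complex.ofReal_mul]
  simp

/-- The substitution `t = y w` exhibits the power `y ^ (a - ν)` in front of an integral over `[0,1]`
that depends on `y` only through `A`. -/
lemma rlKer_scale {a ν : ℝ} {A : ℝ → ℝ} {y : ℝ} (hy : 0 < y) :
    rlKer ν (fun x => x ^ (a - 1) * A (x ^ a)) y
      = y ^ (a - ν) * ∫ w in (0:ℝ)..1, w ^ (a - 1) * (1 - w) ^ (-ν) * A ((y * w) ^ a) := by
  have h := intervalIntegral.integral_comp_mul_left (a := 0) (b := 1)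
    (fun t => t ^ (a - 1) * A (t ^ a) * (y - t) ^ (-ν)) hy.ne'
  rw [mul_zero, mul_one, smul_eq_mul, eq_comm, inv_mul_eq_iff_eq_mul₀ hy.ne'] at h
  rw [rlKer, h, ← intervalIntegral.integral_const_mul, ← intervalIntegral.integral_const_mul]
  refine intervalIntegral.integral_congr fun w hw => ?_
  rw [uIcc_of_le zero_le_one] at hw
  have e : y - y * w = y * (1 - w) := by ring
  have e2 : y ^ (a - ν) = y * (y ^ (a - 1) * y ^ (-ν)) := by
    rw [← Real.rpow_add hy]
    nth_rw 2 [← Real.rpow_one y]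
    rw [← Real.rpow_add hy]; congr 1; ring
  simp only [e, e2]
  rw [Real.mul_rpow (z := a - 1) hy.le hw.1,
    Real.mul_rpow (z := -ν) hy.le (sub_nonneg.2 hw.2)]
  ring

lemma scale_intervalIntegrable {a ν : ℝ} {A : ℝ → ℝ} (ha : 0 < a) (hν : ν < 1)
    (hA : MonotoneOn A (Ici 0)) (hA0 : ∀ x, 0 ≤ x → 0 ≤ A x) {y : ℝ} (hy : 0 ≤ y) :
    IntervalIntegrable (fun w : ℝ => w ^ (a - 1) * (1 - w) ^ (-ν) * A ((y * w) ^ a))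
      volume 0 1 := by
  have hb := beta_intervalIntegrable ha (b := 1 - ν) (by linarith)
  rw [intervalIntegrable_iff_integrableOn_Ioc_of_le zero_le_one] at hb ⊢
  have hb' : IntegrableOn (fun w : ℝ => w ^ (a - 1) * (1 - w) ^ (-ν)) (Ioc 0 1) := by
    simpa using hb
  have hmono : MonotoneOn (fun w => A ((y * w) ^ a)) (Ioc 0 1) := by
    intro u hu v hv huv
    have := hu.1
    have := hv.1
    refine hA (mem_Ici.2 (by positivity)) (mem_Ici.2 (by positivity)) ?_
    gcongr
  refine hb'.mul_bdd (c := A (y ^ a))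
    (aemeasurable_restrict_of_monotoneOn measurableSet_Ioc hmono).aestronglyMeasurable ?_
  filter_upwards [ae_restrict_mem measurableSet_Ioc] with w hw
  have := hw.1
  rw [Real.norm_of_nonneg (hA0 _ (by positivity))]
  refine hA (mem_Ici.2 (by positivity)) (mem_Ici.2 (by positivity)) ?_
  gcongr
  nlinarith [hw.2]

/-- In the form given by `rlKer_scale`, both factors are nonnegative and nondecreasing in `y`. -/
lemma rlKer_monotoneOn {a ν : ℝ} {A : ℝ → ℝ} (ha : 0 < a) (hν : ν < 1) (hνa : ν ≤ a)
    (hA : MonotoneOn A (Ici 0)) (hA0 : ∀ x, 0 ≤ x → 0 ≤ A x) :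
    MonotoneOn (rlKer ν (fun x => x ^ (a - 1) * A (x ^ a))) (Icc 0 1) := by
  have hnn : ∀ y : ℝ, 0 ≤ y →
      0 ≤ ∫ w in (0:ℝ)..1, w ^ (a - 1) * (1 - w) ^ (-ν) * A ((y * w) ^ a) := by
    intro y hy
    refine intervalIntegral.integral_nonneg zero_le_one fun w hw => ?_
    have h1 : 0 ≤ 1 - w := by linarith [hw.2]
    have h0 := hw.1
    have := hA0 ((y * w) ^ a) (by positivity)
    positivity
  intro x hx y hy hxy
  rcases hx.1.eq_or_lt with rfl | hx0
  · rcases hy.1.eq_or_lt with rfl | hy0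
    · exact le_rfl
    · rw [rlKer_scale hy0]
      have : rlKer ν (fun x => x ^ (a - 1) * A (x ^ a)) 0 = 0 := by simp [rlKer]
      rw [this]
      exact mul_nonneg (by positivity) (hnn y hy.1)
  · have hy0 : 0 < y := hx0.trans_le hxy
    rw [rlKer_scale hx0, rlKer_scale hy0]
    have hI := hnn x hx.1
    refine mul_le_mul (Real.rpow_le_rpow hx0.le hxy (by linarith)) ?_ hI (by positivity)
    refine intervalIntegral.integral_mono_on zero_le_one
      (scale_intervalIntegrable ha hν hA hA0 hx.1) (scale_intervalIntegrable ha hν hA hA0 hy.1)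
      fun w hw => ?_
    have h1 : 0 ≤ 1 - w := by linarith [hw.2]
    have h0 := hw.1
    have := hA (a := (x * w) ^ a) (b := (y * w) ^ a)
      (mem_Ici.2 (by positivity)) (mem_Ici.2 (by positivity)) (by gcongr)
    gcongr

lemma rlKer_integrand_intervalIntegrable {a ν : ℝ} {A : ℝ → ℝ} (ha : 0 < a) (hν : ν < 1)
    (hA : MonotoneOn A (Ici 0)) (hA0 : ∀ x, 0 ≤ x → 0 ≤ A x) {y : ℝ} (hy : 0 ≤ y) :
    IntervalIntegrable (fun t => t ^ (a - 1) * A (t ^ a) * (y - t) ^ (-ν)) volume 0 y := by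
  rcases hy.eq_or_lt with rfl | hy0
  · simp
  have h := scale_intervalIntegrable ha hν hA hA0 hy
  have h2 := ((h.comp_mul_left (c := y⁻¹)).const_mul (y ^ (a - ν - 1)))
  simp only [zero_div, one_div, inv_inv] at h2
  refine h2.congr fun t ht => ?_
  rw [uIoc_of_le hy] at ht
  have e1 : y * (y⁻¹ * t) = t := by field_simp
  have e2 : y - t = y * (1 - y⁻¹ * t) := by field_simp
  have e4 : 0 ≤ 1 - y⁻¹ * t := by
    have : y⁻¹ * t ≤ 1 := by
      rw [inv_mul_le_iff₀ hy0]; linarith [ht.2]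
    linarith
  have e3 : t ^ (a - 1) = y ^ (a - 1) * (y⁻¹ * t) ^ (a - 1) := by
    rw [← Real.mul_rpow hy (by have := ht.1; positivity), e1]
  have e5 : y ^ (a - ν - 1) = y ^ (a - 1) * y ^ (-ν) := by
    rw [← Real.rpow_add hy0]; congr 1; ring
  simp only [e1]
  rw [e3, e2, Real.mul_rpow hy e4, e5]
  ring

/-- Since `E(-x) = (E(x) + E(-x)) - E(x)` is a difference of nonnegative nondecreasing functions,
`rlKer_monotoneOn` makes `rlKer ν (falpha α lam)` a difference of monotone functions on `[0,1]`, and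
Lebesgue's theorem on monotone functions gives an integrable derivative. -/
lemma fracDeriv_falpha_integrable {α lam ν : ℝ} (hα : 0 < α) (hlam : 0 < lam)
    (hν : ν < 1) (hνα : ν ≤ α) :
    IntegrableOn (fracDeriv ν (falpha α lam)) (Ioc 0 1) := by
  set A : ℝ → ℝ := fun x => lam * (mlf α α (lam * x) + mlf α α (-(lam * x))) with hAdef
  set B : ℝ → ℝ := fun x => lam * mlf α α (lam * x) with hBdef
  have hA : MonotoneOn A (Ici 0) := by
    intro x hx y hy hxy
    have hx' : 0 ≤ x := hx
    have hy' : 0 ≤ y := hy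
    exact mul_le_mul_of_nonneg_left (mlf_even_monotoneOn hα (mem_Ici.2 (by positivity))
      (mem_Ici.2 (by positivity)) (by gcongr)) hlam.le
  have hB : MonotoneOn B (Ici 0) := by
    intro x hx y hy hxy
    have hx' : 0 ≤ x := hx
    have hy' : 0 ≤ y := hy
    exact mul_le_mul_of_nonneg_left (mlf_monotoneOn hα (mem_Ici.2 (by positivity))
      (mem_Ici.2 (by positivity)) (by gcongr)) hlam.le
  have hA0 : ∀ x, 0 ≤ x → 0 ≤ A x := fun x hx =>
    mul_nonneg hlam.le (mlf_even_nonneg hα (by positivity))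
  have hB0 : ∀ x, 0 ≤ x → 0 ≤ B x := fun x hx =>
    mul_nonneg hlam.le (mlf_nonneg hα (by positivity))
  set P := rlKer ν (fun x => x ^ (α - 1) * A (x ^ α)) with hP
  set Q := rlKer ν (fun x => x ^ (α - 1) * B (x ^ α)) with hQ
  have hPm : MonotoneOn P (Icc 0 1) := rlKer_monotoneOn hα hν hνα hA hA0
  have hQm : MonotoneOn Q (Icc 0 1) := rlKer_monotoneOn hα hν hνα hB hB0
  have hR : ∀ y ∈ Icc (0:ℝ) 1, rlKer ν (falpha α lam) y = P y - Q y := by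
    intro y hy
    rw [hP, hQ, rlKer, rlKer, rlKer, ← intervalIntegral.integral_sub
      (rlKer_integrand_intervalIntegrable hα hν hA hA0 hy.1)
      (rlKer_integrand_intervalIntegrable hα hν hB hB0 hy.1)]
    refine intervalIntegral.integral_congr fun t _ => ?_
    simp only [falpha, hAdef, hBdef, neg_mul]
    ring
  have hPi := MonotoneOn.intervalIntegrable_deriv (a := 0) (b := 1)
    (by rwa [uIcc_of_le zero_le_one] : MonotoneOn P _)
  have hQi := MonotoneOn.intervalIntegrable_deriv (a := 0) (b := 1)
    (by rwa [uIcc_of_le zero_le_one] : MonotoneOn Q _)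
  have hi := (hPi.sub hQi).const_mul (1 / Real.Gamma (1 - ν))
  rw [intervalIntegrable_iff_integrableOn_Ioc_of_le zero_le_one] at hi
  refine hi.congr ?_
  have h1 : ∀ᵐ x : ℝ ∂(volume.restrict (Ioc 0 1)), x ≠ 1 :=
    ae_restrict_of_ae (by simp [ae_iff, measure_singleton])
  filter_upwards [ae_restrict_mem measurableSet_Ioc, h1,
    ae_restrict_of_ae hPm.ae_differentiableWithinAt_of_mem,
    ae_restrict_of_ae hQm.ae_differentiableWithinAt_of_mem] with x hx hx1 hdP hdQ
  have hx' : x ∈ Icc (0:ℝ) 1 := Ioc_subset_Icc_self hx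
  have hn : Icc (0:ℝ) 1 ∈ nhds x := Icc_mem_nhds hx.1 (lt_of_le_of_ne hx.2 hx1)
  have dP := (hdP hx').differentiableAt hn
  have dQ := (hdQ hx').differentiableAt hn
  rw [fracDeriv, derivWithin_congr hR (hR x hx'), derivWithin_of_mem_nhds hn]
  congr 1
  exact (dP.hasDerivAt.sub dQ.hasDerivAt).deriv.symm

/-! ### Fubini for the truncated convolution -/

/-- Integration commutes with convolution: with `k`, `h` the extensions of `K`, `g` by zero, both
sides equal `∫ w, ∫₀ᵗ k w * h (s - w) ds`. -/
lemma fubini_conv {K g : ℝ → ℝ} {t : ℝ} (ht : t ∈ Icc (0 : ℝ) 1)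
    (hK : IntegrableOn K (Ioc 0 1)) (hg : IntegrableOn g (Ioc 0 1)) :
    (∫ s in (0:ℝ)..t, K (t - s) * ∫ u in (0:ℝ)..s, g u)
      = ∫ s in (0:ℝ)..t, ∫ u in (0:ℝ)..s, K (s - u) * g u := by
  obtain ⟨ht0, ht1⟩ := ht
  set k : ℝ → ℝ := (Ioc 0 1).indicator K with hk
  set h : ℝ → ℝ := (Ioc 0 1).indicator g with hh
  have hki : Integrable k := hK.integrable_indicator measurableSet_Ioc
  have hhi : Integrable h := hg.integrable_indicator measurableSet_Ioc
  have hprod : Integrable (Function.uncurry fun s w => k w * h (s - w))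
      ((volume.restrict (uIoc 0 t)).prod volume) := by
    have := hki.convolution_integrand (ContinuousLinearMap.mul ℝ ℝ) hhi
    refine this.mono_measure ?_
    exact Measure.prod_mono Measure.restrict_le_self le_rfl
  have inner : ∀ s ∈ Icc 0 t, (∫ u in (0:ℝ)..s, K (s - u) * g u) = ∫ w, k w * h (s - w) := by
    intro s hs
    have e : (fun w => k w * h (s - w))
        =ᵐ[volume] (Ioc 0 s).indicator fun w => K w * g (s - w) := by
      have h1 : ∀ᵐ w : ℝ, w ≠ s := by simp [ae_iff, measure_singleton]
      filter_upwards [h1] with w hw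
      by_cases hm : w ∈ Ioc 0 s
      · have h2 : w < s := lt_of_le_of_ne hm.2 hw
        rw [indicator_of_mem hm, hk, hh, indicator_of_mem, indicator_of_mem]
        · constructor <;> linarith [hm.1, hs.2]
        · exact ⟨hm.1, by linarith [hm.2, hs.2]⟩
      · rw [indicator_of_notMem hm]
        by_cases hw0 : 0 < w
        · have : s - w ∉ Ioc (0:ℝ) 1 := fun h' => hm ⟨hw0, by linarith [h'.1]⟩
          rw [hh, indicator_of_notMem this, mul_zero]
        · rw [hk, indicator_of_notMem (fun h' => hw0 h'.1), zero_mul]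
    rw [integral_congr_ae e, integral_indicator measurableSet_Ioc,
      ← intervalIntegral.integral_of_le hs.1]
    have := intervalIntegral.integral_comp_sub_left (fun w => K w * g (s - w)) s (a := 0) (b := s)
    simpa using this
  have outer : ∀ w, (∫ s in (0:ℝ)..t, k w * h (s - w))
      = (Ioc 0 t).indicator (fun w => K w * ∫ u in (0:ℝ)..(t - w), g u) w := by
    intro w
    rw [intervalIntegral.integral_const_mul, intervalIntegral.integral_comp_sub_right]
    by_cases hm : w ∈ Ioc 0 t
    · rw [indicator_of_mem hm, hk, indicator_of_mem (show w ∈ Ioc (0:ℝ) 1 from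
        ⟨hm.1, hm.2.trans ht1⟩)]
      congr 1
      rw [← intervalIntegral.integral_add_adjacent_intervals (b := 0)
        hhi.intervalIntegrable hhi.intervalIntegrable]
      have z : (∫ x in (0 - w)..0, h x) = 0 := by
        rw [intervalIntegral.integral_of_le (by linarith [hm.1])]
        refine setIntegral_eq_zero_of_forall_eq_zero fun x hx => ?_
        exact indicator_of_notMem (fun h' => absurd h'.1 (not_lt.2 hx.2)) _
      rw [z, zero_add]
      refine intervalIntegral.integral_congr_ae (Eventually.of_forall fun x hx => ?_)
      rw [uIoc_of_le (by linarith [hm.2])] at hx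
      exact indicator_of_mem (show x ∈ Ioc (0:ℝ) 1 from ⟨hx.1, by linarith [hx.2, hm.1]⟩) _
    · rw [indicator_of_notMem hm]
      by_cases hw0 : 0 < w
      · have z : (∫ x in (0 - w)..(t - w), h x) = 0 := by
          rw [intervalIntegral.integral_of_le (by linarith)]
          refine setIntegral_eq_zero_of_forall_eq_zero fun x hx => ?_
          have : t < w := not_le.1 fun h' => hm ⟨hw0, h'⟩
          exact indicator_of_notMem (fun h' => absurd h'.1 (not_lt.2 (by linarith [hx.2]))) _
        rw [z, mul_zero]
      · rw [hk, indicator_of_notMem (fun h' => hw0 h'.1), zero_mul]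
  have rhs : (∫ s in (0:ℝ)..t, ∫ u in (0:ℝ)..s, K (s - u) * g u)
      = ∫ s in (0:ℝ)..t, ∫ w, k w * h (s - w) := by
    refine intervalIntegral.integral_congr fun s hs => inner s ?_
    rwa [uIcc_of_le ht0] at hs
  rw [rhs, intervalIntegral_integral_swap hprod]
  simp_rw [outer]
  rw [integral_indicator measurableSet_Ioc, ← intervalIntegral.integral_of_le ht0]
  have := intervalIntegral.integral_comp_sub_left
    (fun w => K w * ∫ u in (0:ℝ)..(t - w), g u) t (a := 0) (b := t)
  simpa using this

/-! ### The Marchaud derivative and its primitive -/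

/-- For a bounded `γ`-Hölder function `W` vanishing on the negative half-line and `0 < μ < γ`,
the kernel integral `rlKer μ W` is the primitive of the continuous function
`D y = ∫ r in (0, ∞), μ r ^ (-μ - 1) (W y - W (y - r))` (the Marchaud form of the derivative).
Swapping integrals turns `∫₀ˢ D` into `∫ r, μ r ^ (-μ - 1) (P s - P (s - r))` with `P` the primitive
of `W`; an integration by parts then gives `∫ r, r ^ (-μ) W (s - r) = rlKer μ W s`. -/
lemma marchaud {W : ℝ → ℝ} {M C γ μ : ℝ} (hW : Continuous W) (hM : ∀ x, |W x| ≤ M)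
    (hH : ∀ x y, |W x - W y| ≤ C * |x - y| ^ γ) (h0 : ∀ x ≤ 0, W x = 0)
    (hμ : 0 < μ) (hμγ : μ < γ) (hμ1 : μ < 1) :
    ∃ D : ℝ → ℝ, Continuous D ∧ ∀ s, 0 ≤ s → ∫ y in (0:ℝ)..s, D y = rlKer μ W s := by
  set F : ℝ → ℝ → ℝ := fun y r => μ * r ^ (-μ - 1) * (W y - W (y - r)) with hF
  -- A `y`-independent integrable majorant: Hölder continuity near `r = 0`, boundedness at infinity.
  set b : ℝ → ℝ := (Ioc 0 1).piecewise (fun r => μ * C * r ^ (γ - μ - 1))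
    (fun r => μ * (2 * M) * r ^ (-μ - 1)) with hb
  have hbi : IntegrableOn b (Ioi 0) := by
    rw [← Ioc_union_Ioi_eq_Ioi (zero_le_one (α := ℝ))]
    refine IntegrableOn.union ?_ ?_
    · refine IntegrableOn.congr_fun (f := fun r => μ * C * r ^ (γ - μ - 1)) ?_
        (fun r hr => by rw [hb, piecewise_eq_of_mem _ _ _ hr]) measurableSet_Ioc
      rw [← intervalIntegrable_iff_integrableOn_Ioc_of_le zero_le_one]
      exact (intervalIntegral.intervalIntegrable_rpow' (by linarith)).const_mul _
    · refine IntegrableOn.congr_fun (f := fun r => μ * (2 * M) * r ^ (-μ - 1)) ?_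
        (fun r hr => by
          rw [hb, piecewise_eq_of_notMem _ _ _ fun h' : r ∈ Ioc (0:ℝ) 1 =>
            absurd h'.2 (not_le.2 hr)]) measurableSet_Ioi
      exact (integrableOn_Ioi_rpow_of_lt (by linarith) zero_lt_one).const_mul _
  have hFb : ∀ y, ∀ r ∈ Ioi (0:ℝ), ‖F y r‖ ≤ b r := by
    intro y r hr
    have hr' : 0 < r := hr
    have e : ‖F y r‖ = μ * r ^ (-μ - 1) * |W y - W (y - r)| := by
      rw [hF, Real.norm_eq_abs, abs_mul, abs_of_nonneg (by positivity)]
    rw [e]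
    by_cases h1 : r ∈ Ioc (0:ℝ) 1
    · rw [hb, piecewise_eq_of_mem _ _ _ h1]
      have h2 := hH y (y - r)
      rw [sub_sub_cancel, abs_of_pos hr'] at h2
      have e2 : r ^ (γ - μ - 1) = r ^ (-μ - 1) * r ^ γ := by
        rw [← Real.rpow_add hr']; congr 1; ring
      calc μ * r ^ (-μ - 1) * |W y - W (y - r)| ≤ μ * r ^ (-μ - 1) * (C * r ^ γ) := by gcongr
        _ = _ := by rw [e2]; ring
    · rw [hb, piecewise_eq_of_notMem _ _ _ h1]
      have h2 : |W y - W (y - r)| ≤ 2 * M := by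
        have := abs_sub (W y) (W (y - r))
        linarith [hM y, hM (y - r)]
      calc μ * r ^ (-μ - 1) * |W y - W (y - r)| ≤ μ * r ^ (-μ - 1) * (2 * M) := by gcongr
        _ = _ := by ring
  have hFm : Measurable (Function.uncurry F) := by
    have := hW.measurable
    simp only [hF, Function.uncurry_def]
    fun_prop
  refine ⟨fun y => ∫ r in Ioi 0, F y r, ?_, ?_⟩
  · refine continuous_of_dominated
      (fun y => (hFm.comp measurable_prodMk_left).aestronglyMeasurable)
      (fun y => (ae_restrict_iff' measurableSet_Ioi).2 (Eventually.of_forall (hFb y))) hbi ?_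
    refine Eventually.of_forall fun r => ?_
    simp only [hF]
    fun_prop
  intro s hs
  have hprod : Integrable (Function.uncurry F)
      ((volume.restrict (uIoc 0 s)).prod (volume.restrict (Ioi 0))) := by
    have hb2 : Integrable (fun p : ℝ × ℝ => (1 : ℝ) * b p.2)
        ((volume.restrict (uIoc 0 s)).prod (volume.restrict (Ioi 0))) :=
      Integrable.mul_prod (f := fun _ : ℝ => (1:ℝ))
        (by rw [uIoc_of_le hs]; exact integrableOn_const (by simp)) hbi
    refine hb2.mono' hFm.aestronglyMeasurable ?_
    rw [Measure.prod_restrict, ae_restrict_iff' (measurableSet_uIoc.prod measurableSet_Ioi)]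
    exact Eventually.of_forall fun p hp => by
      rw [one_mul]
      exact hFb p.1 p.2 hp.2
  rw [intervalIntegral_integral_swap hprod]
  have hInt : ∀ a c, IntervalIntegrable W volume a c := fun a c => hW.intervalIntegrable a c
  set P : ℝ → ℝ := fun x => ∫ t in (0:ℝ)..x, W t with hP
  have hP0 : ∀ x ≤ 0, P x = 0 := by
    intro x hx
    rw [hP]
    simp only []
    rw [intervalIntegral.integral_symm, neg_eq_zero]
    refine intervalIntegral.integral_zero_ae (Eventually.of_forall fun t ht => ?_)
    rw [uIoc_of_le hx] at ht
    exact h0 t ht.2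
  have hPd : ∀ x, HasDerivAt P (W x) x := fun x => hW.integral_hasStrictDerivAt 0 x |>.hasDerivAt
  set v : ℝ → ℝ := fun r => P s - P (s - r) with hv
  have hswap : ∀ r ∈ Ioi (0:ℝ), (∫ y in (0:ℝ)..s, F y r) = μ * r ^ (-μ - 1) * v r := by
    intro r hr
    have hr' : 0 < r := hr
    have hW' : Continuous fun x => W (x - r) := hW.comp (continuous_id.sub continuous_const)
    simp only [hF]
    rw [intervalIntegral.integral_const_mul,
      intervalIntegral.integral_sub (hInt _ _) (hW'.intervalIntegrable _ _),
      intervalIntegral.integral_comp_sub_right]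
    have e := intervalIntegral.integral_interval_sub_left (hInt 0 (s - r)) (hInt 0 (0 - r))
    have e0 : (∫ t in (0:ℝ)..(0 - r), W t) = 0 := hP0 _ (by linarith)
    rw [← e, e0, sub_zero]
  rw [setIntegral_congr_fun measurableSet_Ioi hswap]
  -- Integrate by parts with `u r = -r ^ (-μ)` and `v r = P s - P (s - r)`, whose derivative is
  -- `W (s - r)`.
  have hu : ∀ r ∈ Ioi (0:ℝ), HasDerivAt (fun r : ℝ => -r ^ (-μ)) (μ * r ^ (-μ - 1)) r := by
    intro r hr
    have := (Real.hasDerivAt_rpow_const (x := r) (p := -μ) (Or.inl (ne_of_gt hr))).neg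
    convert! this using 1
    ring
  have hvd : ∀ r ∈ Ioi (0:ℝ), HasDerivAt v (W (s - r)) r := by
    intro r _
    have h1 := (hPd (s - r)).scomp r ((hasDerivAt_id r).const_sub s)
    have h2 := h1.const_sub (P s)
    convert! h2 using 1
    simp
  have huv' : IntegrableOn ((fun r : ℝ => -r ^ (-μ)) * fun r => W (s - r)) (Ioi 0) := by
    rw [← Ioc_union_Ioi_eq_Ioi hs]
    refine IntegrableOn.union ?_ ?_
    · rw [← intervalIntegrable_iff_integrableOn_Ioc_of_le hs]
      exact ((intervalIntegral.intervalIntegrable_rpow' (by linarith)).neg).mul_continuousOn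
        (by fun_prop)
    · refine integrableOn_zero.congr_fun (fun r hr => ?_) measurableSet_Ioi
      have hr' : s < r := hr
      simp [h0 (s - r) (by linarith)]
  have hu'v : IntegrableOn ((fun r : ℝ => μ * r ^ (-μ - 1)) * v) (Ioi 0) := by
    have := hprod.integral_prod_right
    refine IntegrableOn.congr_fun this (fun r hr => ?_) measurableSet_Ioi
    have h1 := hswap r hr
    rw [intervalIntegral.integral_of_le hs] at h1
    rw [uIoc_of_le hs]
    exact h1
  have hvb : ∀ r, |v r| ≤ M * |r| := by
    intro r
    have e := intervalIntegral.integral_interval_sub_left (hInt 0 s) (hInt 0 (s - r))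
    simp only [hv, hP, e]
    have := intervalIntegral.norm_integral_le_of_norm_le_const (a := s - r) (b := s) (f := W)
      (C := M) (fun x _ => hM x)
    simpa using this
  have hz : Tendsto ((fun r : ℝ => -r ^ (-μ)) * v) (nhdsWithin 0 (Ioi 0)) (nhds 0) := by
    have h1 : Tendsto (fun r : ℝ => M * r ^ (1 - μ)) (nhdsWithin 0 (Ioi 0)) (nhds 0) := by
      have : ContinuousAt (fun r : ℝ => M * r ^ (1 - μ)) 0 :=
        continuousAt_const.mul (Real.continuousAt_rpow_const _ _ (Or.inr (by linarith)))
      have h2 := this.tendsto.mono_left (nhdsWithin_le_nhds (s := Ioi 0))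
      rwa [Real.zero_rpow (by linarith), mul_zero] at h2
    refine squeeze_zero_norm' ?_ h1
    filter_upwards [self_mem_nhdsWithin] with r hr
    have hr' : 0 < r := hr
    have h3 := hvb r
    rw [abs_of_pos hr'] at h3
    have e : r ^ (1 - μ) = r ^ (-μ) * r := by
      nth_rw 3 [← Real.rpow_one r]
      rw [← Real.rpow_add hr']; congr 1; ring
    rw [Pi.mul_apply, norm_mul, norm_neg, Real.norm_of_nonneg (by positivity : 0 ≤ r ^ (-μ)), e]
    calc r ^ (-μ) * ‖v r‖ ≤ r ^ (-μ) * (M * r) := by gcongr; exact h3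
      _ = _ := by ring
  have hinf : Tendsto ((fun r : ℝ => -r ^ (-μ)) * v) atTop (nhds 0) := by
    have h1 := (tendsto_rpow_neg_atTop hμ).neg.mul_const (P s)
    rw [neg_zero, zero_mul] at h1
    refine h1.congr' ?_
    filter_upwards [eventually_ge_atTop s] with r hr
    simp [hv, hP0 (s - r) (by linarith)]
  have ibp := integral_Ioi_mul_deriv_eq_deriv_mul hu hvd huv' hu'v hz hinf
  have key : (∫ r in Ioi (0:ℝ), μ * r ^ (-μ - 1) * v r)
      = ∫ r in Ioi (0:ℝ), r ^ (-μ) * W (s - r) := by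
    have e : (∫ r in Ioi (0:ℝ), -r ^ (-μ) * W (s - r))
        = -∫ r in Ioi (0:ℝ), r ^ (-μ) * W (s - r) := by
      rw [← integral_neg]; congr 1; ext r; ring
    linarith
  rw [key, setIntegral_eq_of_subset_of_forall_sdiff_eq_zero measurableSet_Ioi
    (Ioc_subset_Ioi_self : Ioc 0 s ⊆ Ioi 0), ← intervalIntegral.integral_of_le hs, rlKer]
  · have := intervalIntegral.integral_comp_sub_left (fun t => W t * (s - t) ^ (-μ)) s
      (a := 0) (b := s)
    simp only [sub_sub_cancel, sub_self, sub_zero] at this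
    rw [← this]
    simp_rw [mul_comm]
  · intro r hr
    have : s < r := by
      by_contra h'
      exact hr.2 ⟨hr.1, not_lt.1 h'⟩
    rw [h0 (s - r) (by linarith), mul_zero]

/-- On `[0,1]` the kernel integral `rlKer μ Z` is the primitive of its own (continuous) derivative.
Only values of `Z` on `[0,1]` matter, so `marchaud` is applied to the extension of `Z` that is
constant on each side of `[0,1]`. -/
lemma rlKer_primitive {Z : ℝ → ℝ} {μ γ : ℝ} (hc : ContinuousOn Z (Icc 0 1)) (h0 : Z 0 = 0)
    (hZ : HolderOn Z γ (Icc 0 1)) (hμ : 0 < μ) (hμγ : μ < γ) (hμ1 : μ < 1) :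
    ∃ D : ℝ → ℝ, Continuous D ∧
      (∀ s ∈ Icc (0:ℝ) 1, derivWithin (rlKer μ Z) (Icc 0 1) s = D s) ∧
      ∀ s ∈ Icc (0:ℝ) 1, rlKer μ Z s = ∫ y in (0:ℝ)..s, D y := by
  obtain ⟨C, hC, hZ⟩ := hZ
  set W : ℝ → ℝ := fun x => Z (projIcc 0 1 zero_le_one x) with hWdef
  have hW : Continuous W := by
    have := (continuousOn_iff_continuous_domRestrict.1 hc).comp
      (continuous_projIcc (a := (0:ℝ)) (b := 1) (h := zero_le_one))
    exact this
  obtain ⟨M, hM⟩ := isCompact_Icc.exists_bound_of_continuousOn hc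
  have hWM : ∀ x, |W x| ≤ M := fun x => hM _ (projIcc 0 1 zero_le_one x).2
  have hWH : ∀ x y, |W x - W y| ≤ C * |x - y| ^ γ := by
    intro x y
    refine (hZ _ (projIcc 0 1 zero_le_one x).2 _ (projIcc 0 1 zero_le_one y).2).trans ?_
    have : |(projIcc (0:ℝ) 1 zero_le_one x : ℝ) - projIcc (0:ℝ) 1 zero_le_one y| ≤ |x - y| :=
      abs_projIcc_sub_projIcc zero_le_one
    have hγ : 0 ≤ γ := by linarith
    gcongr
  have hW0 : ∀ x ≤ 0, W x = 0 := by
    intro x hx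
    simp [hWdef, projIcc_of_le_left zero_le_one hx, h0]
  obtain ⟨D, hD, hDi⟩ := marchaud hW hWM hWH hW0 hμ hμγ hμ1
  have heq : ∀ s ∈ Icc (0:ℝ) 1, rlKer μ Z s = ∫ y in (0:ℝ)..s, D y := by
    intro s hs
    rw [hDi s hs.1, rlKer, rlKer]
    refine intervalIntegral.integral_congr fun t ht => ?_
    rw [uIcc_of_le hs.1] at ht
    simp only [hWdef]
    rw [projIcc_of_mem zero_le_one ⟨ht.1, ht.2.trans hs.2⟩]
  refine ⟨D, hD, fun s hs => ?_, heq⟩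
  rw [derivWithin_congr heq (heq s hs)]
  exact (hD.integral_hasStrictDerivAt 0 s).hasDerivAt.hasDerivWithinAt.derivWithin
    (uniqueDiffOn_Icc zero_lt_one s hs)

/-! ### The identity -/

/-- for `α ∈ (1/2,1)`, `ν ∈ (1/2,α)` and `Z` continuous on `[0,1]` with
`Z(0)=0` and Hölder regularity `γ` for every `γ < 1/2`, one has
`I^ν Z_s = ∫_0^s D^{1-ν} Z_u du`, and for every `t ∈ [0,1]`,
`∫_0^t D^ν f^{α,λ}(t-s) I^ν Z_s ds = ∫_0^t ∫_0^s D^ν f^{α,λ}(s-u) D^{1-ν} Z_u du ds`. -/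
theorem fubini_frac_identity (α lam ν : ℝ)
    (hα : α ∈ Set.Ioo (1 / 2 : ℝ) 1) (hlam : 0 < lam)
    (hν : ν ∈ Set.Ioo (1 / 2 : ℝ) α)
    (Z : ℝ → ℝ) (hZcont : ContinuousOn Z (Set.Icc 0 1)) (hZ0 : Z 0 = 0)
    (hZhold : ∀ γ : ℝ, 0 < γ → γ < 1 / 2 → HolderOn Z γ (Set.Icc 0 1)) :
    (∀ s ∈ Set.Icc (0:ℝ) 1, fracInt ν Z s = ∫ u in (0:ℝ)..s, fracDeriv (1 - ν) Z u) ∧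
    ∀ t ∈ Set.Icc (0:ℝ) 1,
      (∫ s in (0:ℝ)..t, fracDeriv ν (falpha α lam) (t - s) * fracInt ν Z s)
        = ∫ s in (0:ℝ)..t,
            ∫ u in (0:ℝ)..s, fracDeriv ν (falpha α lam) (s - u) * fracDeriv (1 - ν) Z u := by
  obtain ⟨hα0, hα1⟩ := hα
  obtain ⟨hν0, hνα⟩ := hν
  -- `γ` is the midpoint of `1 - ν < 1 / 2`.
  obtain ⟨D, hD, hDd, hDi⟩ := rlKer_primitive (μ := 1 - ν) (γ := ((1 - ν) + 1 / 2) / 2) hZcont hZ0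
    (hZhold _ (by linarith) (by linarith)) (by linarith) (by linarith) (by linarith)
  have hfd : ∀ u ∈ Icc (0:ℝ) 1, fracDeriv (1 - ν) Z u = 1 / Real.Gamma ν * D u := by
    intro u hu
    rw [fracDeriv, hDd u hu, sub_sub_cancel]
  have h1 : ∀ s ∈ Icc (0:ℝ) 1, fracInt ν Z s = ∫ u in (0:ℝ)..s, fracDeriv (1 - ν) Z u := by
    intro s hs
    have e : fracInt ν Z s = 1 / Real.Gamma ν * rlKer (1 - ν) Z s := by
      rw [fracInt, rlKer, neg_sub]
    rw [e, hDi s hs, ← intervalIntegral.integral_const_mul]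
    refine intervalIntegral.integral_congr fun u hu => ?_
    rw [uIcc_of_le hs.1] at hu
    exact (hfd u ⟨hu.1, hu.2.trans hs.2⟩).symm
  refine ⟨h1, fun t ht => ?_⟩
  have hg : IntegrableOn (fracDeriv (1 - ν) Z) (Ioc 0 1) := by
    have : IntegrableOn (fun u => 1 / Real.Gamma ν * D u) (Ioc 0 1) :=
      (continuous_const.mul hD).integrableOn_Ioc
    exact this.congr_fun (fun u hu => (hfd u (Ioc_subset_Icc_self hu)).symm) measurableSet_Ioc
  have hK := fracDeriv_falpha_integrable (α := α) (ν := ν) (by linarith) hlam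
    (by linarith) hνα.le
  rw [← fubini_conv ht hK hg]
  refine intervalIntegral.integral_congr fun s hs => ?_
  rw [uIcc_of_le ht.1] at hs
  simp only [h1 s ⟨hs.1, hs.2.trans ht.2⟩]
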